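/- Let γ>1, β∈ℝ, v_l, v_r > 0, σ < 0, and suppose states U_l ≠ U_r satisfy the six Rankine–Hugoniot conditions with speed σ, the entropy inequality [G] − σ[η] ≤ 0, and the Lax condition σ² < β²/v_r. Then v_r < v_l and u_{1,r} < u_{1,l}. (Thus for a 3-shock of arbitrary amplitude, [v] < 0 and [u₁] < 0.) -/

import Mathlib

/-!
Pair each Rankine–Hugoniot condition with the mean, over the two states, of its dual variable.
With `b = q / v`, the product rule for jumps collapses the entropy production to
`[G] - σ [η] = -σ ((p_l + p_r) / 2 * [v] + [e] + [v] * |[b]|² / 4)`, where `e' = -p`.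
If `[v] > 0`, the sum of the first two terms is the error of the trapezoidal rule for `∫ p`,
which is positive because `p` is strictly convex; so for `σ < 0` the entropy production would have
the wrong sign. If `[v] = 0`, the transverse conditions are a linear system that is singular only
for `σ² = β² / v`, so the states coincide.
-/

open Set
open scoped RealInnerProductSpace

theorem strictConvexOn_rpow_of_neg {s : ℝ} (hs : s < 0) :
    StrictConvexOn ℝ (Ioi 0) fun x : ℝ ↦ x ^ s := by
  refine StrictMonoOn.strictConvexOn_of_deriv (convex_Ioi 0)
    (fun x hx ↦ (Real.continuousAt_rpow_const x s (Or.inl (ne_of_gt hx))).continuousWithinAt) ?_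
  rw [interior_Ioi]
  intro x hx y _ hxy
  simp only [Real.deriv_rpow_const]
  exact mul_lt_mul_of_neg_left (Real.rpow_lt_rpow_of_neg hx hxy (by linarith)) hs

theorem hasDerivAt_rpow_one_sub_div {γ x : ℝ} (hγ : γ ≠ 1) (hx : x ≠ 0) :
    HasDerivAt (fun x ↦ x ^ (1 - γ) / (γ - 1)) (-x ^ (-γ)) x := by
  have hγ' : γ - 1 ≠ 0 := sub_ne_zero.2 hγ
  refine ((Real.hasDerivAt_rpow_const (Or.inl hx)).div_const (γ - 1)).congr_deriv ?_
  rw [sub_sub_cancel_left]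
  field_simp
  ring

theorem lt_chord_of_strictConvexOn {f : ℝ → ℝ} {a b x : ℝ} (hf : StrictConvexOn ℝ (Icc a b) f)
    (hx : x ∈ Ioo a b) : f x < f a + (f b - f a) / (b - a) * (x - a) := by
  have hab : a < b := hx.1.trans hx.2
  have secant_lt : (f x - f a) / (x - a) < (f b - f a) / (b - a) :=
    hf.secant_strict_mono (left_mem_Icc.2 hab.le) (Ioo_subset_Icc_self hx)
      (right_mem_Icc.2 hab.le) hx.1.ne' hab.ne' hx.2
  linarith [(div_lt_iff₀ (sub_pos.2 hx.1)).1 secant_lt]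

theorem sub_lt_trapezoid_of_strictConvexOn {f F : ℝ → ℝ} {a b : ℝ} (hab : a < b)
    (hf : StrictConvexOn ℝ (Icc a b) f) (hF : ContinuousOn F (Icc a b))
    (hF' : ∀ x ∈ Ioo a b, HasDerivAt F (f x) x) :
    F b - F a < (f a + f b) / 2 * (b - a) := by
  set s := (f b - f a) / (b - a)
  let gap : ℝ → ℝ := fun x ↦ f a * (x - a) + s * (x - a) ^ 2 / 2 - F x
  have hasDerivAt_gap : ∀ x ∈ Ioo a b, HasDerivAt gap (f a + s * (x - a) - f x) x := by
    intro x hx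
    have hsub : HasDerivAt (fun x ↦ x - a) 1 x := (hasDerivAt_id x).sub_const a
    refine (((hsub.const_mul (f a)).add (((hsub.pow 2).const_mul s).div_const 2)).sub
      (hF' x hx)).congr_deriv ?_
    simp only [Nat.cast_ofNat]
    ring
  have strictMonoOn_gap : StrictMonoOn gap (Icc a b) := by
    refine strictMonoOn_of_deriv_pos (convex_Icc a b) (by fun_prop) fun x hx ↦ ?_
    rw [interior_Icc] at hx
    rw [(hasDerivAt_gap x hx).deriv]
    exact sub_pos.2 (lt_chord_of_strictConvexOn hf hx)
  have gap_lt : gap a < gap b :=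
    strictMonoOn_gap (left_mem_Icc.2 hab.le) (right_mem_Icc.2 hab.le) hab
  have hchord : s * (b - a) = f b - f a := div_mul_cancel₀ _ (sub_pos.2 hab).ne'
  simp only [gap] at gap_lt
  linear_combination gap_lt + (b - a) / 2 * hchord

/-- A state of one-dimensional MHD in Lagrangian mass coordinates: specific volume `v`,
conserved transverse magnetic variable `q`, longitudinal velocity `u` and transverse velocity `w`.
The paper's `q₂, q₃` and `u₂, u₃` are the coordinates of `q` and `w`, and its `u₁` is `u`. -/
@[ext]
structure MHDState (V : Type*) where
  v : ℝ
  q : V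
  u : ℝ
  w : V

namespace MHDState

variable {V : Type*} [NormedAddCommGroup V] [InnerProductSpace ℝ V]

/-- The transverse magnetic field `q / v`, the variable dual to `q` with respect to the entropy. -/
noncomputable def field (U : MHDState V) : V := U.v⁻¹ • U.q

/-- The sum of gas pressure `p` and magnetic pressure: the flux of longitudinal momentum. -/
noncomputable def totalPressure (p : ℝ → ℝ) (U : MHDState V) : ℝ := p U.v + ‖U.field‖ ^ 2 / 2

/-- The total (internal, kinetic and magnetic) energy, which serves as the mathematical entropy
`η`. The internal energy `e` is a separate argument, tied to the pressure by `e' = -p`. -/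
noncomputable def entropy (e : ℝ → ℝ) (U : MHDState V) : ℝ :=
  e U.v + (U.u ^ 2 + ‖U.w‖ ^ 2) / 2 + ‖U.q‖ ^ 2 / (2 * U.v)

/-- The flux `G` of the entropy. -/
noncomputable def entropyFlux (p : ℝ → ℝ) (β : ℝ) (U : MHDState V) : ℝ :=
  U.totalPressure p * U.u - β * ⟪U.field, U.w⟫

/-- The Rankine–Hugoniot conditions for a discontinuity of speed `σ` between a left state `L` and
a right state `R`, with gas pressure `p` and constant longitudinal magnetic field `β`. -/
structure RankineHugoniot (p : ℝ → ℝ) (β σ : ℝ) (L R : MHDState V) : Prop where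
  volume : -(R.u - L.u) = σ * (R.v - L.v)
  magnetic : -(β • (R.w - L.w)) = σ • (R.q - L.q)
  longitudinalMomentum : R.totalPressure p - L.totalPressure p = σ * (R.u - L.u)
  transverseMomentum : -(β • (R.field - L.field)) = σ • (R.w - L.w)

theorem smul_field {U : MHDState V} (hv : U.v ≠ 0) : U.v • U.field = U.q :=
  smul_inv_smul₀ hv U.q

variable {p e : ℝ → ℝ} {β σ : ℝ} {L R : MHDState V}

theorem magneticEnergy_eq {U : MHDState V} (hv : U.v ≠ 0) :
    ‖U.q‖ ^ 2 / (2 * U.v) = U.v * ‖U.field‖ ^ 2 / 2 := by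
  rw [← smul_field hv, norm_smul, mul_pow, Real.norm_eq_abs, sq_abs]
  field_simp

theorem inner_add_field_sub_q (hL : L.v ≠ 0) (hR : R.v ≠ 0) :
    ⟪L.field + R.field, R.q - L.q⟫ =
      R.v * ‖R.field‖ ^ 2 - L.v * ‖L.field‖ ^ 2 + (R.v - L.v) * ⟪L.field, R.field⟫ := by
  rw [← smul_field hL, ← smul_field hR]
  simp only [inner_add_left, inner_sub_right, real_inner_smul_right, real_inner_self_eq_norm_sq,
    real_inner_comm L.field R.field]
  ring

namespace RankineHugoniot

theorem inner_field_velocity_jump (h : RankineHugoniot p β σ L R) :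
    -(β * (⟪R.field, R.w⟫ - ⟪L.field, L.w⟫)) =
      σ * ((‖R.w‖ ^ 2 - ‖L.w‖ ^ 2) / 2 + ⟪L.field + R.field, R.q - L.q⟫ / 2) := by
  have hq := congrArg (⟪L.field + R.field, ·⟫) h.magnetic
  have hw := congrArg (⟪·, L.w + R.w⟫) h.transverseMomentum
  simp only [inner_neg_left, inner_neg_right, real_inner_smul_left, real_inner_smul_right,
    inner_add_left, inner_add_right, inner_sub_left, inner_sub_right,
    real_inner_self_eq_norm_sq, real_inner_comm L.w R.w] at hq hw ⊢
  linear_combination (hq + hw) / 2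

theorem entropyProduction_eq (h : RankineHugoniot p β σ L R) (hL : L.v ≠ 0) (hR : R.v ≠ 0) :
    R.entropyFlux p β - L.entropyFlux p β - σ * (R.entropy e - L.entropy e) =
      -σ * ((p L.v + p R.v) / 2 * (R.v - L.v) + (e R.v - e L.v) +
        (R.v - L.v) * ‖R.field - L.field‖ ^ 2 / 4) := by
  have hwork := h.inner_field_velocity_jump
  have hpressure := h.longitudinalMomentum
  rw [inner_add_field_sub_q hL hR] at hwork
  rw [norm_sub_sq_real, real_inner_comm]
  simp only [entropyFlux, entropy, magneticEnergy_eq hL, magneticEnergy_eq hR, totalPressure]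
    at hpressure ⊢
  linear_combination hwork + (L.u + R.u) / 2 * hpressure -
    (p L.v + p R.v + ‖L.field‖ ^ 2 / 2 + ‖R.field‖ ^ 2 / 2) / 2 * h.volume

theorem eq_of_volume_eq (h : RankineHugoniot p β σ L R) (hv : L.v = R.v) (hσ : σ ≠ 0)
    (hchar : σ ^ 2 ≠ β ^ 2 / R.v) : L = R := by
  have hfield : R.field - L.field = R.v⁻¹ • (R.q - L.q) := by
    rw [field, field, hv, smul_sub]
  have hsingular : (σ ^ 2 - β ^ 2 / R.v) • (R.q - L.q) = 0 := by
    have htrans := h.transverseMomentum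
    rw [hfield] at htrans
    linear_combination (norm := module) β • htrans - σ • h.magnetic
  have hq : R.q - L.q = 0 := (smul_eq_zero.1 hsingular).resolve_left (sub_ne_zero.2 hchar)
  have hw : R.w - L.w = 0 := by
    have htrans := h.transverseMomentum
    rw [hfield, hq, smul_zero, smul_zero, neg_zero] at htrans
    exact (smul_eq_zero.1 htrans.symm).resolve_left hσ
  have hu : R.u = L.u := by
    have hvol := h.volume
    rw [hv] at hvol
    linarith
  exact MHDState.ext hv (sub_eq_zero.1 hq).symm hu.symm (sub_eq_zero.1 hw).symm

theorem entropyProduction_pos (h : RankineHugoniot p β σ L R)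
    (hp : StrictConvexOn ℝ (Ioi 0) p) (he : ∀ x, 0 < x → HasDerivAt e (-p x) x)
    (hL : 0 < L.v) (hσ : σ < 0) (hv : L.v < R.v) :
    0 < R.entropyFlux p β - L.entropyFlux p β - σ * (R.entropy e - L.entropy e) := by
  have hsub : Icc L.v R.v ⊆ Ioi 0 := fun x hx ↦ hL.trans_le hx.1
  have neg_e_deriv : ∀ x ∈ Icc L.v R.v, HasDerivAt (fun x ↦ -e x) (p x) x := fun x hx ↦ by
    simpa only [neg_neg] using (he x (hsub hx)).fun_neg
  have htrapezoid : -e R.v - -e L.v < (p L.v + p R.v) / 2 * (R.v - L.v) :=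
    sub_lt_trapezoid_of_strictConvexOn hv (hp.subset hsub (convex_Icc _ _))
      (fun x hx ↦ (neg_e_deriv x hx).continuousAt.continuousWithinAt)
      fun x hx ↦ neg_e_deriv x (Ioo_subset_Icc_self hx)
  have hmagnetic : 0 ≤ (R.v - L.v) * ‖R.field - L.field‖ ^ 2 / 4 := by
    have := sub_pos.2 hv
    positivity
  rw [h.entropyProduction_eq hL.ne' (hL.trans hv).ne']
  exact mul_pos (neg_pos.2 hσ) (by linarith)

end RankineHugoniot

/-- The state with coordinates `(v, q₂, q₃, u₁, u₂, u₃)`, in the paper's order. -/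
noncomputable def ofCoords (v q₂ q₃ u₁ u₂ u₃ : ℝ) : MHDState (EuclideanSpace ℝ (Fin 2)) :=
  ⟨v, !₂[q₂, q₃], u₁, !₂[u₂, u₃]⟩

section Coordinates

variable {v q₂ q₃ u₁ u₂ u₃ : ℝ}

theorem field_ofCoords : (ofCoords v q₂ q₃ u₁ u₂ u₃).field = !₂[q₂ / v, q₃ / v] := by
  ext i
  fin_cases i <;> simp [field, ofCoords, div_eq_inv_mul]

theorem totalPressure_ofCoords :
    (ofCoords v q₂ q₃ u₁ u₂ u₃).totalPressure p = p v + (q₂ ^ 2 + q₃ ^ 2) / (2 * v ^ 2) := by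
  rw [totalPressure, field_ofCoords, EuclideanSpace.real_norm_sq_eq]
  simp only [ofCoords, Fin.sum_univ_two, Matrix.cons_val_zero, Matrix.cons_val_one]
  ring

theorem entropy_ofCoords :
    (ofCoords v q₂ q₃ u₁ u₂ u₃).entropy e =
      e v + (u₁ ^ 2 + u₂ ^ 2 + u₃ ^ 2) / 2 + (q₂ ^ 2 + q₃ ^ 2) / (2 * v) := by
  simp [entropy, ofCoords, EuclideanSpace.real_norm_sq_eq, add_assoc]

theorem entropyFlux_ofCoords :
    (ofCoords v q₂ q₃ u₁ u₂ u₃).entropyFlux p β =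
      (p v + (q₂ ^ 2 + q₃ ^ 2) / (2 * v ^ 2)) * u₁ - β / v * (q₂ * u₂ + q₃ * u₃) := by
  rw [entropyFlux, totalPressure_ofCoords, field_ofCoords]
  simp only [ofCoords, PiLp.inner_apply, Fin.sum_univ_two, Matrix.cons_val_zero,
    Matrix.cons_val_one, Real.inner_apply]
  ring

variable {v' q₂' q₃' u₁' u₂' u₃' : ℝ}

theorem ofCoords_inj :
    ofCoords v q₂ q₃ u₁ u₂ u₃ = ofCoords v' q₂' q₃' u₁' u₂' u₃' ↔
      v = v' ∧ q₂ = q₂' ∧ q₃ = q₃' ∧ u₁ = u₁' ∧ u₂ = u₂' ∧ u₃ = u₃' := by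
  simp [ofCoords, and_assoc]

theorem rankineHugoniot_ofCoords
    (volume : -(u₁' - u₁) = σ * (v' - v))
    (magnetic₂ : -(β * (u₂' - u₂)) = σ * (q₂' - q₂))
    (magnetic₃ : -(β * (u₃' - u₃)) = σ * (q₃' - q₃))
    (longitudinalMomentum : p v' - p v +
      ((q₂' ^ 2 + q₃' ^ 2) / (2 * v' ^ 2) - (q₂ ^ 2 + q₃ ^ 2) / (2 * v ^ 2)) = σ * (u₁' - u₁))
    (transverseMomentum₂ : -(β * (q₂' / v' - q₂ / v)) = σ * (u₂' - u₂))
    (transverseMomentum₃ : -(β * (q₃' / v' - q₃ / v)) = σ * (u₃' - u₃)) :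
    RankineHugoniot p β σ (ofCoords v q₂ q₃ u₁ u₂ u₃) (ofCoords v' q₂' q₃' u₁' u₂' u₃') where
  volume := volume
  magnetic := by
    ext i
    fin_cases i
    exacts [magnetic₂, magnetic₃]
  longitudinalMomentum := by
    rw [totalPressure_ofCoords, totalPressure_ofCoords]
    exact (add_sub_add_comm _ _ _ _).trans longitudinalMomentum
  transverseMomentum := by
    rw [field_ofCoords, field_ofCoords]
    ext i
    fin_cases i
    exacts [transverseMomentum₂, transverseMomentum₃]

end Coordinates

end MHDState

theorem mhd_3shock_compression_general {V : Type*} [NormedAddCommGroup V] [InnerProductSpace ℝ V]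
    {p e : ℝ → ℝ} {β σ : ℝ} {L R : MHDState V} (hp : StrictConvexOn ℝ (Ioi 0) p)
    (he : ∀ x, 0 < x → HasDerivAt e (-p x) x) (hL : 0 < L.v) (hσ : σ < 0) (hne : L ≠ R)
    (hRH : L.RankineHugoniot p β σ R)
    (hent : R.entropyFlux p β - L.entropyFlux p β - σ * (R.entropy e - L.entropy e) ≤ 0)
    (hchar : σ ^ 2 ≠ β ^ 2 / R.v) :
    R.v < L.v ∧ R.u < L.u := by
  have hv : R.v < L.v := by
    rcases lt_trichotomy R.v L.v with hlt | heq | hgt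
    · exact hlt
    · exact absurd (hRH.eq_of_volume_eq heq.symm hσ.ne hchar) hne
    · exact absurd hent (hRH.entropyProduction_pos hp he hL hσ hgt).not_ge
  exact ⟨hv, by linarith [hRH.volume, mul_pos_of_neg_of_neg hσ (sub_neg.2 hv)]⟩

/-- For states `U_l ≠ U_r` satisfying the Rankine–Hugoniot conditions with speed
`σ < 0`, the entropy inequality `[G] − σ[η] ≤ 0`, and the Lax condition `σ² < β²/v_r`, one has
`v_r < v_l` and `u_{1,r} < u_{1,l}`; i.e. for a 3-shock of arbitrary amplitude `[v] < 0` and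
`[u₁] < 0`. -/
theorem mhd_3shock_compression
    (γ β σ vl vr q2l q3l u1l u2l u3l q2r q3r u1r u2r u3r : ℝ)
    (hγ : 1 < γ) (hvl : 0 < vl) (hvr : 0 < vr) (hσ : σ < 0)
    (hne : ¬(vl = vr ∧ q2l = q2r ∧ q3l = q3r ∧ u1l = u1r ∧ u2l = u2r ∧ u3l = u3r))
    (rh1 : -(u1r - u1l) = σ * (vr - vl))
    (rh2 : -(β * (u2r - u2l)) = σ * (q2r - q2l))
    (rh3 : -(β * (u3r - u3l)) = σ * (q3r - q3l))
    (rh4 : (vr ^ (-γ) - vl ^ (-γ)) +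
      ((q2r ^ 2 + q3r ^ 2) / (2 * vr ^ 2) - (q2l ^ 2 + q3l ^ 2) / (2 * vl ^ 2)) =
        σ * (u1r - u1l))
    (rh5 : -(β * (q2r / vr - q2l / vl)) = σ * (u2r - u2l))
    (rh6 : -(β * (q3r / vr - q3l / vl)) = σ * (u3r - u3l))
    (etal etar Gl Gr : ℝ)
    (hetal : etal = vl ^ (1 - γ) / (γ - 1) + (u1l ^ 2 + u2l ^ 2 + u3l ^ 2) / 2 +
      (q2l ^ 2 + q3l ^ 2) / (2 * vl))
    (hetar : etar = vr ^ (1 - γ) / (γ - 1) + (u1r ^ 2 + u2r ^ 2 + u3r ^ 2) / 2 +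
      (q2r ^ 2 + q3r ^ 2) / (2 * vr))
    (hGl : Gl = (vl ^ (-γ) + (q2l ^ 2 + q3l ^ 2) / (2 * vl ^ 2)) * u1l -
      (β / vl) * (q2l * u2l + q3l * u3l))
    (hGr : Gr = (vr ^ (-γ) + (q2r ^ 2 + q3r ^ 2) / (2 * vr ^ 2)) * u1r -
      (β / vr) * (q2r * u2r + q3r * u3r))
    (hent : (Gr - Gl) - σ * (etar - etal) ≤ 0)
    (hlax : σ ^ 2 < β ^ 2 / vr) :
    vr < vl ∧ u1r < u1l := by
  subst hetal hetar hGl hGr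
  simp only [← MHDState.entropy_ofCoords (e := fun v ↦ v ^ (1 - γ) / (γ - 1)),
    ← MHDState.entropyFlux_ofCoords (p := fun v ↦ v ^ (-γ))] at hent
  exact mhd_3shock_compression_general (strictConvexOn_rpow_of_neg (by linarith))
    (fun x hx ↦ hasDerivAt_rpow_one_sub_div hγ.ne' hx.ne') hvl hσ
    (mt MHDState.ofCoords_inj.1 hne)
    (MHDState.rankineHugoniot_ofCoords rh1 rh2 rh3 rh4 rh5 rh6) hent hlax.ne
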